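/- arXiv:2307.13126 — 2 statements merged into one kernel-verified Lean document; each statement's English description precedes it below -/
import Mathlib

section
/- Let K be a field, R = K[x_1,…,x_n], and let M be a finitely generated R-module of finite length. Then there is an R-module isomorphism Ext^n_R(Ext^n_R(M,R),R) ≅ M. -/
open CategoryTheory RingTheory.Sequence

/-!
Write `R = K[x₁, …, xₙ]`. Every maximal ideal of `R` is generated by a regular sequence of length
`n` (`maxGen_mvPolynomial`): by induction on `n`, since `K[x₁, …, xₙ]` is a Jacobson ring, a maximal
ideal of the polynomial ring in one more variable contracts to a maximal ideal below, and is
generated by that contraction together with one further polynomial. Hence each simple module `S` has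
projective dimension at most `n` and satisfies `Extⁱ(S, R) = 0` for `i < n`; both properties pass to
extensions, so they hold for every module `M` of finite length (`MaxGen.finiteLength`).

Let `P` be a resolution of `M` of length `n` by finite projective modules (`exists_isResolution`).
The cohomology of the dual complex `P* = Hom(P, R)` is `Extⁱ(M, R)`, which vanishes for `i < n`, so
`P*` read backwards is a projective resolution, again of length `n`, of `N = coker (P*ₙ₋₁ → P*ₙ)`,
which is `Extⁿ(M, R)` (`dualComplex_isResolution`). Dualising once more,
`Extⁿ(N, R) = coker (P₁** → P₀**)`, and this is `coker (P₁ → P₀) = M` because finite projective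
modules are reflexive (`exists_dualComplex_coker`). The two halves meet in `nonempty_ext_ext_iso`.
-/

/-! ### Maximal ideals of polynomial rings -/

/-- Every maximal ideal of `R` is generated by a weakly regular sequence of length `n`. (On `R`
itself such a sequence is regular, the ideal being proper.) -/
def MaxGen (n : ℕ) (R : Type*) [CommRing R] : Prop :=
  ∀ m : Ideal R, m.IsMaximal →
    ∃ rs : List R, rs.length = n ∧ IsWeaklyRegular R rs ∧ Ideal.ofList rs = m

theorem maxGen_zero_of_field (K : Type*) [Field K] : MaxGen 0 K := by
  intro m hm
  refine ⟨[], rfl, by simp, ?_⟩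
  simpa using (Ideal.eq_bot_of_prime m).symm

theorem MaxGen.of_ringEquiv {n : ℕ} {R S : Type*} [CommRing R] [CommRing S] (h : MaxGen n R)
    (e : R ≃+* S) : MaxGen n S := by
  intro m hm
  obtain ⟨rs, h1, h2, h3⟩ := h (m.comap e) (Ideal.comap_isMaximal_of_surjective e e.surjective)
  refine ⟨rs.map e, by simpa using h1, ?_, ?_⟩
  · refine (e.toAddEquiv.isWeaklyRegular_congr ?_).1 h2
    exact List.forall₂_map_right_iff.mpr <| List.forall₂_same.mpr fun r _ x => by simp
  · have := Ideal.map_ofList (e : R →+* S) rs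
    rw [h3] at this
    rw [← Ideal.map_comap_of_surjective (e : R →+* S) e.surjective m]
    exact this.symm

open Polynomial in
/-- If `m` is maximal in `R[X]` then, `R` being Jacobson, `J = m ∩ R` is maximal, and `m` is
generated by `J` and a lift of the generator of its image in the principal ideal domain
`(R ⧸ J)[X]`. -/
theorem MaxGen.polynomial {n : ℕ} {R : Type*} [CommRing R] [IsJacobsonRing R] (h : MaxGen n R) :
    MaxGen (n + 1) R[X] := by
  intro m hm
  have hJ : (m.comap (C : R →+* R[X])).IsMaximal := isMaximal_comap_C_of_isJacobsonRing m
  set J := m.comap (C : R →+* R[X]) with hJdef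
  obtain ⟨rs, h1, h2, h3⟩ := h J hJ
  let : Field (R ⧸ J) := Ideal.Quotient.field J
  let q : R[X] →+* (R ⧸ J)[X] := mapRingHom (Ideal.Quotient.mk J)
  have hq : Function.Surjective q := map_surjective _ Ideal.Quotient.mk_surjective
  have hker : RingHom.ker q = J.map C := by
    rw [ker_mapRingHom, Ideal.mk_ker]
  have hle : RingHom.ker q ≤ m := by
    rw [hker]; exact Ideal.map_le_iff_le_comap.2 le_rfl
  have hmax : (m.map q).IsMaximal :=
    Ideal.IsMaximal.map_of_surjective_of_ker_le hq hle
  obtain ⟨f, hf⟩ := IsPrincipalIdealRing.principal (m.map q)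
  -- `f = 0` would make the zero ideal of `(R ⧸ J)[X]` maximal.
  have hf0 : f ≠ 0 := by
    rintro rfl
    have hb : m.map q = ⊥ := by rw [hf]; simp
    rw [hb] at hmax
    exact Polynomial.not_isField _ (Ring.isField_iff_maximal_bot.2 hmax)
  obtain ⟨p, rfl⟩ := hq f
  have hmul : Ideal.ofList (rs.map (C : R →+* R[X])) = RingHom.ker q := by
    rw [← Ideal.map_ofList, h3, hker]
  refine ⟨rs.map C ++ [p], by simpa using h1, ?_, ?_⟩
  · rw [isWeaklyRegular_append_iff]
    refine ⟨IsWeaklyRegular.of_flat (S := R[X]) h2, ?_⟩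
    rw [isWeaklyRegular_cons_iff]
    refine ⟨?_, by simp⟩
    rw [isSMulRegular_iff_right_eq_zero_of_smul]
    intro x hx
    obtain ⟨x, rfl⟩ := Submodule.Quotient.mk_surjective _ x
    rw [← Submodule.Quotient.mk_smul, Submodule.Quotient.mk_eq_zero] at hx
    rw [Submodule.Quotient.mk_eq_zero]
    rw [hmul] at hx ⊢
    simp only [smul_eq_mul, Ideal.mul_top, RingHom.mem_ker, map_mul, mul_eq_zero] at hx ⊢
    exact hx.resolve_left hf0
  · rw [Ideal.ofList_append, hmul, Ideal.ofList_singleton]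
    have := Ideal.comap_map_of_surjective' q hq m
    rw [sup_eq_left.2 hle, hf, Ideal.submodule_span_eq, ← Set.image_singleton, ← Ideal.map_span,
      Ideal.comap_map_of_surjective' q hq] at this
    rw [← this, sup_comm]

theorem maxGen_mvPolynomial (K : Type*) [Field K] (n : ℕ) :
    MaxGen n (MvPolynomial (Fin n) K) := by
  induction n with
  | zero => exact (maxGen_zero_of_field K).of_ringEquiv (MvPolynomial.isEmptyRingEquiv K _).symm
  | succ n ih => exact ih.polynomial.of_ringEquiv (MvPolynomial.finSuccEquiv K n).symm.toRingEquiv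

/-! ### Projective dimension and Ext vanishing for modules of finite length -/

/-- Dividing out a weakly regular sequence raises the projective dimension by at most its length. -/
theorem hasProjectiveDimensionLE_quotient_ofList {R : Type} [CommRing R] (M : Type)
    [AddCommGroup M] [Module R M] (k : ℕ) (hM : HasProjectiveDimensionLE (ModuleCat.of R M) k)
    (rs : List R) (reg : IsWeaklyRegular M rs) :
    HasProjectiveDimensionLE
      (ModuleCat.of R (M ⧸ (Ideal.ofList rs • ⊤ : Submodule R M))) (k + rs.length) := by
  induction rs generalizing M k with
  | nil =>
    let e : M ≃ₗ[R] (M ⧸ (Ideal.ofList ([] : List R) • ⊤ : Submodule R M)) :=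
      (Submodule.quotEquivOfEqBot _ (by simp)).symm
    exact ModuleCat.hasProjectiveDimensionLE_of_linearEquiv (M := ModuleCat.of R M)
      (N := ModuleCat.of R _) e k
  | cons r rs ih =>
    rw [isWeaklyRegular_cons_iff] at reg
    have hS := IsSMulRegular.smulShortComplex_shortExact (M := ModuleCat.of R M) reg.1
    have h1 : HasProjectiveDimensionLE (ModuleCat.of R (QuotSMulTop r M)) (k + 1) :=
      hS.hasProjectiveDimensionLT_X₃ (k + 1) hM
        (hasProjectiveDimensionLT_of_ge (ModuleCat.of R M) (k + 1) (k + 2) (by omega))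
    have h2 := ih (QuotSMulTop r M) (k + 1) h1 reg.2
    have := ModuleCat.hasProjectiveDimensionLE_of_linearEquiv (M := ModuleCat.of R _)
      (N := ModuleCat.of R _)
      (Submodule.quotOfListConsSMulTopEquivQuotSMulTopInner M r rs).symm (k + 1 + rs.length)
    rwa [show k + (r :: rs).length = k + 1 + rs.length by simp; omega]

/-- A simple module is `R ⧸ m` with `m` generated by a weakly regular sequence of length `n`: this
bounds its projective dimension by `n`, and a regular sequence of length `n` inside its annihilator
kills `Extⁱ(-, R)` for `i < n`. -/
theorem MaxGen.simple {n : ℕ} {R : Type} [CommRing R] [IsNoetherianRing R] (h : MaxGen n R)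
    (S : Type) [AddCommGroup S] [Module R S] [IsSimpleModule R S] :
    HasProjectiveDimensionLE (ModuleCat.of R S) n ∧
      ∀ i < n, Subsingleton (Abelian.Ext (ModuleCat.of R S) (ModuleCat.of R R) i) := by
  obtain ⟨m, hm, ⟨e⟩⟩ := isSimpleModule_iff_quot_maximal.1 ‹IsSimpleModule R S›
  obtain ⟨rs, h1, h2, h3⟩ := h m hm
  have hsm : (m • ⊤ : Submodule R R) = m := by simp
  constructor
  · have := hasProjectiveDimensionLE_quotient_ofList R 0
      ((projective_iff_hasProjectiveDimensionLE_zero _).1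
        ((IsProjective.iff_projective (R := R) R).1 inferInstance)) rs h2
    rw [h3, h1, hsm, zero_add] at this
    exact ModuleCat.hasProjectiveDimensionLE_of_linearEquiv (M := ModuleCat.of R (R ⧸ m))
      (N := ModuleCat.of R S) e.symm n
  · have hfin : Module.Finite R S := Module.Finite.equiv e.symm
    rw [← h1]
    refine ModuleCat.subsingleton_ext_of_exists_isRegular m (ModuleCat.of R S) ?_
      (ModuleCat.of R R) ?_ rs (fun r hr => ?_) ⟨h2, ?_⟩
    · change Module.support R S ⊆ _
      rw [e.support_eq, Module.support_eq_zeroLocus, Ideal.annihilator_quotient]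
    · change (m • ⊤ : Submodule R R) < ⊤
      rw [hsm]; exact hm.ne_top.lt_top
    · rw [← h3]; exact Ideal.subset_span hr
    · change (⊤ : Submodule R R) ≠ Ideal.ofList rs • ⊤
      rw [h3, hsm]; exact hm.ne_top.symm

/-- Dévissage from the simple case along `0 → N → M → M ⧸ N → 0` with `M ⧸ N` simple. -/
theorem MaxGen.finiteLength {n : ℕ} {R : Type} [CommRing R] [IsNoetherianRing R] (h : MaxGen n R)
    (M : Type) [AddCommGroup M] [Module R M] (hM : IsFiniteLength R M) :
    HasProjectiveDimensionLE (ModuleCat.of R M) n ∧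
      ∀ i < n, Subsingleton (Abelian.Ext (ModuleCat.of R M) (ModuleCat.of R R) i) := by
  induction hM with
  | @of_subsingleton M _ _ _ =>
    have h0 : Limits.IsZero (ModuleCat.of R M) := ModuleCat.isZero_of_subsingleton _
    have := h0.hasProjectiveDimensionLT_zero
    exact ⟨hasProjectiveDimensionLT_of_ge _ 0 _ (by omega), fun i _ =>
      HasProjectiveDimensionLT.subsingleton _ 0 i (by omega) _⟩
  | @of_simple_quotient M _ _ N _ _ ih =>
    have hs := h.simple (M ⧸ N)
    let S : ShortComplex (ModuleCat R) := ModuleCat.shortComplexOfCompEqZero N.subtype N.mkQ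
      (by ext; simp)
    have hS : S.ShortExact :=
      { exact := ModuleCat.shortComplex_exact _ (LinearMap.exact_subtype_mkQ N)
        mono_f := (ModuleCat.mono_iff_injective _).2 N.injective_subtype
        epi_g := (ModuleCat.epi_iff_surjective _).2 N.mkQ_surjective }
    refine ⟨hS.hasProjectiveDimensionLT_X₂ _ ih.1 hs.1, fun i hi => ?_⟩
    have := ih.2 i hi
    have := hs.2 i hi
    refine ⟨fun a b => ?_⟩
    have key : ∀ x : Abelian.Ext (ModuleCat.of R M) (ModuleCat.of R R) i, x = 0 := by
      intro x
      obtain ⟨y, rfl⟩ := Abelian.Ext.contravariant_sequence_exact₂ hS (ModuleCat.of R R) x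
        (Subsingleton.elim (α := Abelian.Ext (ModuleCat.of R N) (ModuleCat.of R R) i) _ _)
      rw [show y = 0 from
        Subsingleton.elim (α := Abelian.Ext (ModuleCat.of R (M ⧸ N)) (ModuleCat.of R R) i) _ _]
      simp
    rw [key a, key b]

/-! ### Finite projective resolutions -/

/-- The chain complex `P`, augmented by `π : P₀ ⟶ M`, is a projective resolution of `M`, with
exactness expressed elementwise. -/
structure IsResolution {R : Type} [CommRing R] (P : ChainComplex (ModuleCat.{0} R) ℕ)
    {M : ModuleCat.{0} R} (π : P.X 0 ⟶ M) : Prop where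
  exact (i : ℕ) : Function.Exact (P.d (i + 2) (i + 1)) (P.d (i + 1) i)
  exact₀ : Function.Exact (P.d 1 0) π
  surjective : Function.Surjective π
  projective (i : ℕ) : Module.Projective R (P.X i)

section

variable {R : Type} [CommRing R] {P : ChainComplex (ModuleCat.{0} R) ℕ}
    {M : ModuleCat.{0} R} {π : P.X 0 ⟶ M}

theorem IsResolution.comp_eq_zero (h : IsResolution P π) : P.d 1 0 ≫ π = 0 := by
  ext x
  exact h.exact₀.apply_apply_eq_zero x

/-- The projective resolution of `M`, in the sense of Mathlib, underlying an `IsResolution`. -/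
noncomputable def IsResolution.projectiveResolution (h : IsResolution P π) :
    ProjectiveResolution M where
  complex := P
  projective i := (IsProjective.iff_projective (R := R) (P.X i)).1 (h.projective i)
  π := (ChainComplex.toSingle₀Equiv _ _).symm ⟨π, h.comp_eq_zero⟩
  quasiIso := ⟨fun n => by
    cases n with
    | zero =>
      rw [ChainComplex.quasiIsoAt₀_iff, ShortComplex.quasiIso_iff_of_zeros']
      · have h1 : (ShortComplex.mk (P.d 1 0) π h.comp_eq_zero).Exact :=
          (ShortComplex.ShortExact.moduleCat_exact_iff_function_exact _).2 h.exact₀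
        have h2 : Epi π := (ModuleCat.epi_iff_surjective _).2 h.surjective
        refine (ShortComplex.exact_and_epi_g_iff_of_iso ?_).2 ⟨h1, h2⟩
        exact ShortComplex.isoMk (Iso.refl _) (Iso.refl _) (Iso.refl _)
          (Category.id_comp (P.d 1 0) |>.trans (Category.comp_id (P.d 1 0)).symm)
          (by simp; exact (Category.id_comp π).trans (Category.comp_id π).symm)
      · exact P.shape 0 0 (by simp)
      all_goals rfl
    | succ n =>
      rw [quasiIsoAt_iff_exactAt']
      · rw [HomologicalComplex.exactAt_iff' _ (n + 2) (n + 1) n (by simp) (by simp)]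
        exact (ShortComplex.ShortExact.moduleCat_exact_iff_function_exact _).2 (h.exact n)
      · apply ChainComplex.exactAt_succ_single_obj⟩

/-- A finite module of projective dimension at most `n` over a Noetherian ring has a resolution of
length `n` by finite projective modules: cover `M` by a finite free module and splice with a
resolution of the kernel. -/
theorem exists_isResolution [IsNoetherianRing R] (n : ℕ) (M : ModuleCat.{0} R) [Module.Finite R M]
    (hM : HasProjectiveDimensionLE M n) :
    ∃ (P : ChainComplex (ModuleCat.{0} R) ℕ) (π : P.X 0 ⟶ M), IsResolution P π ∧
      (∀ i, Module.Finite R (P.X i)) ∧ ∀ i, n < i → Subsingleton (P.X i) := by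
  induction n generalizing M with
  | zero =>
    have hp : Module.Projective R M := (IsProjective.iff_projective (R := R) M).2
      ((projective_iff_hasProjectiveDimensionLE_zero _).2 hM)
    let Z : ChainComplex (ModuleCat.{0} R) ℕ := HomologicalComplex.zero
    have hZ (i) : Subsingleton (Z.X i) := ModuleCat.subsingleton_of_isZero (Limits.isZero_zero _)
    refine ⟨Z.augment (0 : Z.X 0 ⟶ M) (by simp), 𝟙 M, ⟨?_, ?_, fun x => ⟨x, rfl⟩, ?_⟩, ?_, ?_⟩
    · rintro (_ | i) x
      · have := hZ 0
        exact ⟨fun _ => ⟨0, Subsingleton.elim (α := Z.X 0) _ _⟩,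
          fun _ => by rw [Subsingleton.elim (α := Z.X 0) x 0]; exact map_zero (ModuleCat.Hom.hom _)⟩
      · have := hZ (i + 1)
        exact ⟨fun _ => ⟨0, Subsingleton.elim (α := Z.X (i + 1)) _ _⟩,
          fun _ => by rw [Subsingleton.elim (α := Z.X (i + 1)) x 0]; exact map_zero (ModuleCat.Hom.hom _)⟩
    · intro x
      refine ⟨fun hx => ⟨0, by rw [map_zero]; exact hx.symm⟩, ?_⟩
      rintro ⟨y, rfl⟩
      have := hZ 0
      rw [Subsingleton.elim (α := Z.X 0) y 0]
      exact map_zero (ModuleCat.Hom.hom _)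
    · rintro (_ | i)
      · exact hp
      · have := hZ i
        exact inferInstanceAs (Module.Projective R (Z.X i))
    · rintro (_ | i)
      · assumption
      · have := hZ i
        exact inferInstanceAs (Module.Finite R (Z.X i))
    · rintro (_ | i) hi
      · omega
      · exact hZ i
  | succ n ih =>
    obtain ⟨k, f, hf⟩ := Module.Finite.exists_fin' R M
    have hS := f.shortExact_shortComplexKer hf
    have hQ : Projective (ModuleCat.of R (Fin k → R)) :=
      (IsProjective.iff_projective (R := R) _).1 inferInstance
    have hN := (hS.hasProjectiveDimensionLT_X₃_iff n hQ).1 hM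
    obtain ⟨P, π, hP, hfin, hsub⟩ := ih (ModuleCat.of R (LinearMap.ker f)) hN
    let ι : ModuleCat.of R (LinearMap.ker f) ⟶ ModuleCat.of R (Fin k → R) :=
      ModuleCat.ofHom (LinearMap.ker f).subtype
    have hι : Function.Injective ι := (LinearMap.ker f).injective_subtype
    refine ⟨P.augment (π ≫ ι) (by rw [← Category.assoc, hP.comp_eq_zero, Limits.zero_comp]),
      ModuleCat.ofHom f, ⟨?_, ?_, hf, ?_⟩, ?_, ?_⟩
    · rintro (_ | i)
      · intro x
        refine Iff.trans ?_ (hP.exact₀ x)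
        exact map_eq_zero_iff ι.hom hι
      · exact hP.exact i
    · intro x
      refine ⟨fun hx => ?_, ?_⟩
      · obtain ⟨y, hy⟩ := hP.surjective (⟨x, hx⟩ : LinearMap.ker f)
        refine ⟨y, ?_⟩
        change ι (π y) = x
        rw [hy]; rfl
      · rintro ⟨y, rfl⟩
        exact (π y : LinearMap.ker f).2
    · rintro (_ | i)
      · exact inferInstanceAs (Module.Projective R (Fin k → R))
      · exact hP.projective i
    · rintro (_ | i)
      · exact inferInstanceAs (Module.Finite R (Fin k → R))
      · exact hfin i
    · rintro (_ | i) hi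
      · omega
      · exact hsub i (by omega)

end

/-! ### Cohomology of the dual of a resolution -/

section

variable {R : Type} [CommRing R] {P : ChainComplex (ModuleCat.{0} R) ℕ}
    {M : ModuleCat.{0} R} {π : P.X 0 ⟶ M}

/-- When `Pₙ₊₁ = 0`, the top cohomology of `Hom(P, R)` is the cokernel of `P*ₙ₋₁ → P*ₙ`, here given
as any `V` with a surjection `g` having the right kernel. For `n = 0` the truncated subtraction makes
`P.d n (n - 1)` the zero map `P.d 0 0`, so that `g` is then injective. -/
theorem nonempty_homology_equiv (P : ChainComplex (ModuleCat.{0} R) ℕ) (n : ℕ)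
    (hn : Subsingleton (P.X (n + 1))) {V : Type} [AddCommGroup V] [Module R V]
    (g : Module.Dual R (P.X n) →ₗ[R] V) (hg : Function.Surjective g)
    (hgd : ∀ f, g f = 0 ↔ ∃ h : Module.Dual R (P.X (n - 1)), h ∘ₗ (P.d n (n - 1)).hom = f) :
    Nonempty ((P.linearYonedaObj R (ModuleCat.of R R)).homology n ≅ ModuleCat.of R V) := by
  set C := P.linearYonedaObj R (ModuleCat.of R R) with hC
  let g' : C.X n ⟶ ModuleCat.of R V :=
    ModuleCat.ofHom (g ∘ₗ (ModuleCat.homLinearEquiv (S := R)).toLinearMap)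
  have hg' : Function.Surjective g' := hg.comp (ModuleCat.homLinearEquiv (S := R)).surjective
  have hprev : (ComplexShape.up ℕ).prev n = n - 1 := by cases n <;> simp
  have hex : Function.Exact (C.sc n).f g' := by
    intro x
    have hx : g' x = g x.hom := rfl
    rw [hx, hgd]
    change _ ↔ x ∈ Set.range (C.d ((ComplexShape.up ℕ).prev n) n)
    rw [hprev]
    constructor
    · rintro ⟨h, hh⟩
      exact ⟨ModuleCat.ofHom h, ModuleCat.hom_ext hh⟩
    · rintro ⟨y, rfl⟩
      exact ⟨y.hom, rfl⟩
  have hw : (C.sc n).f ≫ g' = 0 := by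
    ext x
    exact hex.apply_apply_eq_zero x
  have h0 : (C.sc n).g = 0 := by
    change C.d n ((ComplexShape.up ℕ).next n) = 0
    rw [CochainComplex.next]
    have : Limits.IsZero (P.X (n + 1)) := ModuleCat.isZero_of_subsingleton _
    ext x
    exact this.eq_of_src _ _
  have hE : (ShortComplex.mk _ _ hw).Exact :=
    (ShortComplex.ShortExact.moduleCat_exact_iff_function_exact _).2 hex
  have : Epi g' := (ModuleCat.epi_iff_surjective _).2 hg'
  have : Epi (ShortComplex.mk _ _ hw).g := this
  exact ⟨(ShortComplex.LeftHomologyData.ofIsColimitCokernelCofork (C.sc n) h0 _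
    hE.gIsCokernel).homologyIso⟩

/-- If `Extⁱ(M, R) = 0` then the dual of a projective resolution of `M` is exact in degree `i`. For
`i = 0` the conclusion reads `f = 0`, since `P.d 0 (0 - 1) = 0`. -/
theorem IsResolution.dual_exact (h : IsResolution P π) {i : ℕ}
    (hi : Subsingleton (Abelian.Ext M (ModuleCat.of R R) i)) (f : Module.Dual R (P.X i))
    (hf : f ∘ₗ (P.d (i + 1) i).hom = 0) :
    ∃ g : Module.Dual R (P.X (i - 1)), g ∘ₗ (P.d i (i - 1)).hom = f := by
  cases i with
  | zero =>
    refine ⟨0, ?_⟩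
    have hk : LinearMap.ker π.hom ≤ LinearMap.ker f := by
      intro x hx
      obtain ⟨y, rfl⟩ := (h.exact₀ x).1 hx
      exact DFunLike.congr_fun hf y
    -- `f` vanishes on `ker π`, so it factors through a linear form `q` on `M`, and `Hom(M, R) = 0`.
    let e := π.hom.quotKerEquivOfSurjective h.surjective
    let q : M →ₗ[R] R := (LinearMap.ker π.hom).liftQ f hk ∘ₗ e.symm.toLinearMap
    have hq (x) : q (π x) = f x := by
      have : e.symm (π x) = Submodule.Quotient.mk x := by
        rw [LinearEquiv.symm_apply_eq]; rfl
      simp [q, this]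
    have hq0 : ModuleCat.ofHom q = (0 : M ⟶ ModuleCat.of R R) :=
      (Abelian.Ext.addEquiv₀ (X := M) (Y := ModuleCat.of R R)).symm.injective
        (Subsingleton.elim _ _)
    ext x
    rw [← hq x]
    have := congr($hq0 (π x))
    simpa using this.symm
  | succ i =>
    have hf' : h.projectiveResolution.complex.d (i + 2) (i + 1) ≫ ModuleCat.ofHom f = 0 := by
      ext x
      exact DFunLike.congr_fun hf x
    obtain ⟨g, hg⟩ := (h.projectiveResolution.extMk_eq_zero_iff (Y := ModuleCat.of R R)
      (ModuleCat.ofHom f) (i + 2) rfl hf' i rfl).1 (Subsingleton.elim _ _)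
    refine ⟨g.hom, ?_⟩
    ext x
    exact congr($hg x)

end

/-! ### The dual complex -/

section

variable {R : Type} [CommRing R]

/-- The degree `i` term of the dual complex: the dual of `Pₙ₋ᵢ` if `i ≤ n`, and zero if `i > n`.
It is encoded as a submodule of the dual of `P.X (n - i)`, where the subtraction is truncated, so
that differentials need no transport along equalities of indices. -/
def dualTrunc (P : ChainComplex (ModuleCat.{0} R) ℕ) (n i : ℕ) :
    Submodule R (Module.Dual R (P.X (n - i))) :=
  if i ≤ n then ⊤ else ⊥

theorem dualTrunc_of_le (P : ChainComplex (ModuleCat.{0} R) ℕ) {n i : ℕ} (h : i ≤ n) :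
    dualTrunc P n i = ⊤ := if_pos h

theorem dualTrunc_of_lt (P : ChainComplex (ModuleCat.{0} R) ℕ) {n i : ℕ} (h : n < i) :
    dualTrunc P n i = ⊥ := if_neg (by omega)

theorem dualTrunc_eq_zero {P : ChainComplex (ModuleCat.{0} R) ℕ} {n i : ℕ} (h : n < i)
    (x : dualTrunc P n i) : x = 0 := by
  have hx : x.1 ∈ (⊥ : Submodule R _) := by
    rw [← dualTrunc_of_lt P h]
    exact x.2
  exact Subtype.ext ((Submodule.mem_bot R).1 hx)

theorem dualTrunc_map (P : ChainComplex (ModuleCat.{0} R) ℕ) (n i j : ℕ)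
    (f : Module.Dual R (P.X (n - i))) :
    f ∘ₗ (P.d (n - j) (n - i)).hom ∈ dualTrunc P n j := by
  by_cases hj : j ≤ n
  · rw [dualTrunc_of_le P hj]; trivial
  · rw [dualTrunc_of_lt P (by omega), P.shape _ _ (by simp; omega)]
    simp

/-- The complex `P*₀ → P*₁ → ⋯ → P*ₙ` regarded as a chain complex, with `P*ₙ₋ᵢ` in degree `i`. -/
noncomputable def dualComplex (P : ChainComplex (ModuleCat.{0} R) ℕ) (n : ℕ) :
    ChainComplex (ModuleCat.{0} R) ℕ where
  X i := ModuleCat.of R (dualTrunc P n i)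
  d i j := ModuleCat.ofHom (LinearMap.codRestrict (dualTrunc P n j)
    ((LinearMap.lcomp R R (P.d (n - j) (n - i)).hom) ∘ₗ (dualTrunc P n i).subtype)
    fun f => dualTrunc_map P n i j f.1)
  shape i j hij := by
    simp only [ComplexShape.down_Rel] at hij
    refine ModuleCat.hom_ext (LinearMap.ext fun x => ?_)
    by_cases hi : i ≤ n
    · refine Subtype.ext ?_
      change x.1 ∘ₗ (P.d (n - j) (n - i)).hom = 0
      rw [P.shape _ _ (by simp; omega)]
      simp
    · rw [dualTrunc_eq_zero (by omega) x]
      simp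
  d_comp_d' i j k _ _ := by
    refine ModuleCat.hom_ext (LinearMap.ext fun x => ?_)
    refine Subtype.ext ?_
    change (x.1 ∘ₗ (P.d (n - j) (n - i)).hom) ∘ₗ (P.d (n - k) (n - j)).hom = 0
    rw [LinearMap.comp_assoc, ← ModuleCat.hom_comp, P.d_comp_d]
    simp

/-- If `P*` is exact in degrees below `n`, then read backwards it resolves the cokernel `V` of
`P*ₙ₋₁ → P*ₙ`. -/
theorem dualComplex_isResolution (P : ChainComplex (ModuleCat.{0} R) ℕ) (n : ℕ)
    (hfin : ∀ i, Module.Finite R (P.X i)) (hproj : ∀ i, Module.Projective R (P.X i))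
    (hex : ∀ i < n, ∀ f : Module.Dual R (P.X i), f ∘ₗ (P.d (i + 1) i).hom = 0 →
      ∃ g : Module.Dual R (P.X (i - 1)), g ∘ₗ (P.d i (i - 1)).hom = f)
    {V : Type} [AddCommGroup V] [Module R V]
    (g : Module.Dual R (P.X n) →ₗ[R] V) (hg : Function.Surjective g)
    (hgd : ∀ f, g f = 0 ↔ ∃ h : Module.Dual R (P.X (n - 1)), h ∘ₗ (P.d n (n - 1)).hom = f) :
    IsResolution (dualComplex P n) (M := ModuleCat.of R V)
      (ModuleCat.ofHom (g ∘ₗ (dualTrunc P n 0).subtype)) where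
  exact i := by
    intro x
    refine ⟨fun hx => ?_, ?_⟩
    · by_cases hi : i + 1 ≤ n
      · have hj : n - (i + 1) < n := by omega
        have hx' : x.1 ∘ₗ (P.d (n - i) (n - (i + 1))).hom = 0 := congrArg Subtype.val hx
        obtain ⟨f, hf⟩ := hex _ hj x.1 (by
          rwa [show n - (i + 1) + 1 = n - i by omega])
        by_cases hi2 : i + 2 ≤ n
        · exact ⟨(⟨f, by rw [dualTrunc_of_le P hi2]; trivial⟩ : dualTrunc P n (i + 2)),
            Subtype.ext hf⟩
        -- Here `n = i + 1`, and `x = f ∘ d` vanishes because `P.d 0 0 = 0`.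
        · refine ⟨0, ?_⟩
          rw [map_zero]
          refine Subtype.ext ?_
          rw [← hf, P.shape _ _ (by simp; omega)]
          exact (LinearMap.comp_zero _).symm
      · refine ⟨0, ?_⟩
        rw [map_zero]
        exact (dualTrunc_eq_zero (by omega) x).symm
    · rintro ⟨y, rfl⟩
      exact congr($((dualComplex P n).d_comp_d (i + 2) (i + 1) i) y)
  exact₀ := by
    intro x
    refine (hgd x.1).trans ⟨?_, ?_⟩
    · rintro ⟨h, hh⟩
      by_cases hn : 1 ≤ n
      · exact ⟨(⟨h, by rw [dualTrunc_of_le P hn]; trivial⟩ : dualTrunc P n 1),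
          Subtype.ext hh⟩
      · refine ⟨0, ?_⟩
        rw [map_zero]
        refine Subtype.ext ?_
        rw [← hh, P.shape _ _ (by simp; omega)]
        exact (LinearMap.comp_zero _).symm
    · rintro ⟨y, rfl⟩
      exact ⟨y.1, rfl⟩
  surjective v := by
    obtain ⟨f, rfl⟩ := hg v
    exact ⟨⟨f, by rw [dualTrunc_of_le P (Nat.zero_le n)]; trivial⟩, rfl⟩
  projective i := by
    change Module.Projective R (dualTrunc P n i)
    by_cases hi : i ≤ n
    · rw [dualTrunc_of_le P hi]
      have := hfin (n - i)
      have := hproj (n - i)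
      exact Module.Projective.of_equiv (Submodule.topEquiv (R := R)
        (M := Module.Dual R (P.X (n - i)))).symm
    · rw [dualTrunc_of_lt P (by omega)]
      infer_instance

end

/-! ### Double duality -/

section

variable {R : Type} [CommRing R] {P : ChainComplex (ModuleCat.{0} R) ℕ}
    {M : ModuleCat.{0} R} {π : P.X 0 ⟶ M}

/-- The augmentation `π`, with source rewritten as `P.X (n - n)`, is the cokernel of the last
differential of the double dual. If `n = 0` that differential is `P.d 0 0 = 0`, and exactness holds
because `P₁ = 0`. -/
theorem IsResolution.exists_exact_sub_self (h : IsResolution P π) (n : ℕ)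
    (hsub : ∀ i, n < i → Subsingleton (P.X i)) :
    ∃ p : P.X (n - n) →ₗ[R] M, Function.Surjective p ∧
      Function.Exact (P.d (n - (n - 1)) (n - n)).hom p := by
  cases n with
  | zero =>
    refine ⟨π.hom, h.surjective, fun x => ?_⟩
    have h0 : P.d (0 - (0 - 1)) (0 - 0) = 0 := P.shape _ _ (by simp)
    have := hsub 1 (by omega)
    have hx := h.exact₀ x
    rw [h0]
    refine hx.trans ⟨?_, ?_⟩
    · rintro ⟨y, rfl⟩
      rw [Subsingleton.elim y 0]
      exact ⟨0, by simp⟩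
    · rintro ⟨y, rfl⟩
      exact ⟨0, by simp⟩
  | succ n =>
    have key : ∀ a b : ℕ, a = 1 → b = 0 → ∃ p : P.X b →ₗ[R] M, Function.Surjective p ∧
        Function.Exact (P.d a b).hom p := by
      rintro _ _ rfl rfl
      exact ⟨π.hom, h.surjective, h.exact₀⟩
    exact key _ _ (by omega) (by omega)

/-- By reflexivity of finite projective modules, the cokernel of the last map of the dual of
`dualComplex P n` is the cokernel `M` of `P₁ → P₀`. -/
theorem exists_dualComplex_coker (P : ChainComplex (ModuleCat.{0} R) ℕ) (n : ℕ)
    (hfin : ∀ i, Module.Finite R (P.X i)) (hproj : ∀ i, Module.Projective R (P.X i))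
    {M : Type} [AddCommGroup M] [Module R M]
    (p : P.X (n - n) →ₗ[R] M) (hp : Function.Surjective p)
    (hex : Function.Exact (P.d (n - (n - 1)) (n - n)).hom p) :
    ∃ g : Module.Dual R ((dualComplex P n).X n) →ₗ[R] M, Function.Surjective g ∧
      ∀ f, g f = 0 ↔ ∃ h : Module.Dual R ((dualComplex P n).X (n - 1)),
        h ∘ₗ ((dualComplex P n).d n (n - 1)).hom = f := by
  let e (i : ℕ) (hi : i ≤ n) : (dualComplex P n).X i ≃ₗ[R] Module.Dual R (P.X (n - i)) :=
    LinearEquiv.ofTop (dualTrunc P n i) (dualTrunc_of_le P hi)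
  let ev (i : ℕ) (hi : i ≤ n) :
      P.X (n - i) ≃ₗ[R] Module.Dual R ((dualComplex P n).X i) :=
    (Module.evalEquiv R (P.X (n - i))).trans (e i hi).dualMap
  -- Evaluation is natural: both sides send `t` to `t (d x)`.
  have hd (x : P.X (n - (n - 1))) : ev (n - 1) (by omega) x ∘ₗ
      ((dualComplex P n).d n (n - 1)).hom = ev n le_rfl (P.d (n - (n - 1)) (n - n) x) := rfl
  refine ⟨p ∘ₗ (ev n le_rfl).symm.toLinearMap, hp.comp (ev n le_rfl).symm.surjective,
    fun f => ?_⟩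
  obtain ⟨x, rfl⟩ := (ev n le_rfl).surjective f
  simp only [LinearMap.comp_apply, LinearEquiv.coe_coe, LinearEquiv.symm_apply_apply]
  refine (hex x).trans ⟨?_, ?_⟩
  · rintro ⟨y, rfl⟩
    exact ⟨ev (n - 1) (by omega) y, hd y⟩
  · rintro ⟨h, hh⟩
    obtain ⟨y, rfl⟩ := (ev (n - 1) (by omega)).surjective h
    rw [hd] at hh
    exact ⟨y, (ev n le_rfl).injective hh⟩

/-- Double Ext duality for finite modules of projective dimension at most `n` with
`Extⁱ(M, R) = 0` for `i < n`. -/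
theorem nonempty_ext_ext_iso [IsNoetherianRing R] (n : ℕ) (M : Type) [AddCommGroup M] [Module R M]
    [Module.Finite R M] (hpd : HasProjectiveDimensionLE (ModuleCat.of R M) n)
    (hvan : ∀ i < n, Subsingleton (Abelian.Ext (ModuleCat.of R M) (ModuleCat.of R R) i)) :
    Nonempty (((Ext R (ModuleCat R) n).obj (Opposite.op (((Ext R (ModuleCat R) n).obj
      (Opposite.op (ModuleCat.of R M))).obj (ModuleCat.of R R)))).obj (ModuleCat.of R R) ≅
        ModuleCat.of R M) := by
  obtain ⟨P, π, hP, hfin, hsub⟩ := exists_isResolution n (ModuleCat.of R M) hpd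
  let δ : Module.Dual R (P.X (n - 1)) →ₗ[R] Module.Dual R (P.X n) :=
    LinearMap.lcomp R R (P.d n (n - 1)).hom
  let N := Module.Dual R (P.X n) ⧸ LinearMap.range δ
  let g : Module.Dual R (P.X n) →ₗ[R] N := (LinearMap.range δ).mkQ
  have hg : Function.Surjective g := Submodule.mkQ_surjective _
  have hgd (f) : g f = 0 ↔ ∃ h : Module.Dual R (P.X (n - 1)),
      h ∘ₗ (P.d n (n - 1)).hom = f := by
    rw [← LinearMap.mem_ker, Submodule.ker_mkQ]
    rfl
  obtain ⟨e₁⟩ := nonempty_homology_equiv P n (hsub _ (by omega)) g hg hgd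
  have e₁' : ((Ext R (ModuleCat R) n).obj (Opposite.op (ModuleCat.of R M))).obj
      (ModuleCat.of R R) ≅ ModuleCat.of R N :=
    (hP.projectiveResolution.isoExt n (ModuleCat.of R R)).trans e₁
  have hY := dualComplex_isResolution P n hfin hP.projective
    (fun i hi f hf => hP.dual_exact (hvan i hi) f hf) g hg hgd
  obtain ⟨p, hp, hpex⟩ := hP.exists_exact_sub_self n hsub
  obtain ⟨g₂, hg₂, hgd₂⟩ := exists_dualComplex_coker P n hfin hP.projective p hp hpex
  obtain ⟨e₂⟩ := nonempty_homology_equiv (dualComplex P n) n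
    ⟨fun x y => (dualTrunc_eq_zero (by omega) x).trans (dualTrunc_eq_zero (by omega) y).symm⟩
    g₂ hg₂ hgd₂
  exact ⟨((Ext R (ModuleCat R) n).mapIso e₁'.symm.op).app (ModuleCat.of R R) ≪≫
    hY.projectiveResolution.isoExt n (ModuleCat.of R R) ≪≫ e₂⟩

end

/-- double Ext duality for finite length modules over a polynomial ring. -/
theorem ext_ext_duality {K : Type} [Field K] (n : ℕ)
    (M : Type) [AddCommGroup M] [Module (MvPolynomial (Fin n) K) M]
    [Module.Finite (MvPolynomial (Fin n) K) M]
    (hM : IsFiniteLength (MvPolynomial (Fin n) K) M) :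
    Nonempty
      ((((Ext (MvPolynomial (Fin n) K) (ModuleCat (MvPolynomial (Fin n) K)) n).obj
          (Opposite.op (ModuleCat.of (MvPolynomial (Fin n) K)
            (((Ext (MvPolynomial (Fin n) K) (ModuleCat (MvPolynomial (Fin n) K)) n).obj
                (Opposite.op (ModuleCat.of (MvPolynomial (Fin n) K) M))).obj
              (ModuleCat.of (MvPolynomial (Fin n) K) (MvPolynomial (Fin n) K)))))).obj
        (ModuleCat.of (MvPolynomial (Fin n) K) (MvPolynomial (Fin n) K))) ≃ₗ[MvPolynomial (Fin n) K] M) := by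
  have h := (maxGen_mvPolynomial K n).finiteLength M hM
  obtain ⟨e⟩ := nonempty_ext_ext_iso n M h.1 h.2
  exact ⟨e.toLinearEquiv⟩
end

section
/- Let R = Q[x_1,x_2,x_3,x_4] and let I be the ideal generated by x_4^2, x_3 x_4, x_3^3, x_2 x_3^2 − x_2^2 x_4, x_1 x_3^2 − x_1 x_2 x_4 + x_2^2 x_4, x_2^2 x_3, x_2^3, x_1^3 x_4 − x_1^2 x_2 x_4 + x_1 x_2^2 x_4, x_1^3 x_3, x_1^3 x_2 − x_1^2 x_2^2, x_1^4. Then A = R/I is a standard graded Artinian algebra that has the Weak Lefschetz Property: there exists a linear form l ∈ A_1 such that the multiplication map ·l : A_i → A_{i+1} has full rank for every i ≥ 0. -/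
/-!
The linear form `l = x₁` is a Lefschetz element.

* Modulo `x₁` every cubic monomial lies in `I`: the monomials in `x₂, x₃, x₄` are killed by the
  monomial generators except `x₂x₃² ≡ x₂²x₄`, and the generator `x₁x₃² - x₁x₂x₄ + x₂²x₄` says that
  `x₂²x₄ ≡ x₁(x₂x₄ - x₃²)`. Hence `x₁ : A_i → A_{i+1}` is surjective for all `i ≥ 2`
  (`piece_le_mul`).
* `I` is contained in the monomial ideal of polynomials without any term dividing some `x₁x_j`
  (`ideal_le_noTerms`), so `x₁f ∈ I` with `deg f ≤ 1` forces `f = 0` (`inj_low`).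
* Iterating the surjectivity, `A_{i+4} = x₁⁴A_i = 0` for `i ≥ 2`, so `A` vanishes from degree 6 on.
-/

open MvPolynomial

/-- The degree-`d` graded piece of the quotient `R ⧸ I`. -/
noncomputable def quotPiece {K : Type} [Field K] {σ : Type}
    (I : Ideal (MvPolynomial σ K)) (d : ℕ) : Submodule K (MvPolynomial σ K ⧸ I) :=
  (MvPolynomial.homogeneousSubmodule σ K d).map (Ideal.Quotient.mkₐ K I).toLinearMap

/-- The Weak Lefschetz Property for the standard graded algebra `R ⧸ I`. -/
def HasWLP {K : Type} [Field K] {σ : Type} (I : Ideal (MvPolynomial σ K)) : Prop :=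
  ∃ l ∈ homogeneousSubmodule σ K 1, ∀ i : ℕ,
    (∀ x ∈ quotPiece I i, Ideal.Quotient.mk I l * x = 0 → x = 0) ∨
    (∀ y ∈ quotPiece I (i + 1), ∃ x ∈ quotPiece I i, Ideal.Quotient.mk I l * x = y)

/-- The ideal `I` of the theorem, with `X 0, …, X 3` standing for `x₁, …, x₄`. -/
noncomputable def firstIdeal : Ideal (MvPolynomial (Fin 4) ℚ) :=
  Ideal.span
      ({X 3 ^ 2, X 2 * X 3, X 2 ^ 3,
        X 1 * X 2 ^ 2 - X 1 ^ 2 * X 3,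
        X 0 * X 2 ^ 2 - X 0 * X 1 * X 3 + X 1 ^ 2 * X 3,
        X 1 ^ 2 * X 2, X 1 ^ 3,
        X 0 ^ 3 * X 3 - X 0 ^ 2 * X 1 * X 3 + X 0 * X 1 ^ 2 * X 3,
        X 0 ^ 3 * X 2, X 0 ^ 3 * X 1 - X 0 ^ 2 * X 1 ^ 2, X 0 ^ 4} :
        Set (MvPolynomial (Fin 4) ℚ))

/-- Every cubic monomial is congruent modulo `I` to `x₁` times a quadric. -/
lemma cubic_mem (a b c : Fin 4) : ∃ p : MvPolynomial (Fin 4) ℚ, p.IsHomogeneous 2 ∧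
    X a * X b * X c - X 0 * p ∈ firstIdeal := by
  have mem : ∀ g ∈ ({X 3 ^ 2, X 2 * X 3, X 2 ^ 3,
        X 1 * X 2 ^ 2 - X 1 ^ 2 * X 3,
        X 0 * X 2 ^ 2 - X 0 * X 1 * X 3 + X 1 ^ 2 * X 3,
        X 1 ^ 2 * X 2, X 1 ^ 3,
        X 0 ^ 3 * X 3 - X 0 ^ 2 * X 1 * X 3 + X 0 * X 1 ^ 2 * X 3,
        X 0 ^ 3 * X 2, X 0 ^ 3 * X 1 - X 0 ^ 2 * X 1 ^ 2, X 0 ^ 4} :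
        Set (MvPolynomial (Fin 4) ℚ)), g ∈ firstIdeal := fun g hg => Ideal.subset_span hg
  have hX : ∀ i j : Fin 4, (X i * X j : MvPolynomial (Fin 4) ℚ).IsHomogeneous 2 :=
    fun i j => (isHomogeneous_X ℚ i).mul (isHomogeneous_X ℚ j)
  have key : ∀ q : MvPolynomial (Fin 4) ℚ, q ∈ firstIdeal →
      X a * X b * X c = q → ∃ p : MvPolynomial (Fin 4) ℚ, p.IsHomogeneous 2 ∧
    X a * X b * X c - X 0 * p ∈ firstIdeal := fun q hq h =>
      ⟨0, isHomogeneous_zero _ _ _, by rwa [mul_zero, sub_zero, h]⟩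
  have h33 : (X 3 ^ 2 : MvPolynomial (Fin 4) ℚ) ∈ firstIdeal := mem _ (by simp)
  have h23 : (X 2 * X 3 : MvPolynomial (Fin 4) ℚ) ∈ firstIdeal := mem _ (by simp)
  have h222 : (X 2 ^ 3 : MvPolynomial (Fin 4) ℚ) ∈ firstIdeal := mem _ (by simp)
  have h112 : (X 1 ^ 2 * X 2 : MvPolynomial (Fin 4) ℚ) ∈ firstIdeal := mem _ (by simp)
  have h111 : (X 1 ^ 3 : MvPolynomial (Fin 4) ℚ) ∈ firstIdeal := mem _ (by simp)
  have hA : (X 1 * X 2 ^ 2 - X 1 ^ 2 * X 3 : MvPolynomial (Fin 4) ℚ) ∈ firstIdeal :=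
    mem _ (by simp)
  have hB : (X 0 * X 2 ^ 2 - X 0 * X 1 * X 3 + X 1 ^ 2 * X 3 : MvPolynomial (Fin 4) ℚ)
      ∈ firstIdeal := mem _ (by simp)
  -- The two cubic monomials in `x₂, x₃, x₄` outside `I` share the quadric `x₂x₄ - x₃²`.
  have key' : X a * X b * X c - X 0 * (X 1 * X 3 - X 2 * X 2) ∈ firstIdeal →
      ∃ p : MvPolynomial (Fin 4) ℚ, p.IsHomogeneous 2 ∧
    X a * X b * X c - X 0 * p ∈ firstIdeal := fun h => ⟨_, (hX 1 3).sub (hX 2 2), h⟩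
  by_cases ha : a = 0
  · exact ⟨X b * X c, hX _ _, by simp [ha, mul_assoc]⟩
  by_cases hb : b = 0
  · exact ⟨X a * X c, hX _ _, by subst hb; ring_nf; simp⟩
  by_cases hc : c = 0
  · exact ⟨X a * X b, hX _ _, by subst hc; ring_nf; simp⟩
  have hd : ∀ g q : MvPolynomial (Fin 4) ℚ, g ∈ firstIdeal → q * g ∈ firstIdeal :=
    fun g q hg => Ideal.mul_mem_left _ _ hg
  have e1 : (X 1 ^ 2 * X 3 - X 0 * (X 1 * X 3 - X 2 * X 2) : MvPolynomial (Fin 4) ℚ)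
      ∈ firstIdeal := by convert hB using 1; ring
  have e2 : (X 1 * X 2 ^ 2 - X 0 * (X 1 * X 3 - X 2 * X 2) : MvPolynomial (Fin 4) ℚ)
      ∈ firstIdeal := by convert add_mem hA hB using 1; ring
  fin_cases a <;> first | exact absurd rfl ha | skip
  all_goals fin_cases b <;> first | exact absurd rfl hb | skip
  all_goals fin_cases c <;> first | exact absurd rfl hc | skip
  all_goals simp only [Fin.mk_one, Fin.reduceFinMk] at key key' ⊢
  all_goals first
    | exact key _ h222 (by ring1)
    | exact key _ h112 (by ring1)
    | exact key _ h111 (by ring1)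
    | exact key _ (hd _ (X 1) h33) (by ring1)
    | exact key _ (hd _ (X 2) h33) (by ring1)
    | exact key _ (hd _ (X 3) h33) (by ring1)
    | exact key _ (hd _ (X 1) h23) (by ring1)
    | exact key _ (hd _ (X 2) h23) (by ring1)
    | exact key' (by convert e1 using 1; ring1)
    | exact key' (by convert e2 using 1; ring1)

lemma exists_single_add {m : Fin 4 →₀ ℕ} {n : ℕ} (h : m.degree = n + 1) :
    ∃ a m', m'.degree = n ∧ m = Finsupp.single a 1 + m' := by
  have : m ≠ 0 := by rintro rfl; simp at h
  obtain ⟨a, ha⟩ := Finsupp.ne_iff.1 this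
  have hle : Finsupp.single a 1 ≤ m := by
    rw [Finsupp.single_le_iff]; exact Nat.one_le_iff_ne_zero.2 ha
  refine ⟨a, m - Finsupp.single a 1, ?_, (add_tsub_cancel_of_le hle).symm⟩
  have h2 := congrArg Finsupp.degree (add_tsub_cancel_of_le hle)
  rw [map_add, h, Finsupp.degree_single] at h2
  omega

/-- Multiplication by `x₁` maps `A_{k+2}` onto `A_{k+3}`. -/
lemma piece_le_mul (k : ℕ) (y : MvPolynomial (Fin 4) ℚ ⧸ firstIdeal)
    (hy : y ∈ quotPiece firstIdeal (k + 2 + 1)) :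
    ∃ x ∈ quotPiece firstIdeal (k + 2), Ideal.Quotient.mk firstIdeal (X 0) * x = y := by
  obtain ⟨q, hq, rfl⟩ := hy
  let T := (quotPiece firstIdeal (k + 2)).map
    (LinearMap.mulLeft ℚ (Ideal.Quotient.mk firstIdeal (X 0)))
  suffices h : q ∈ T.comap (Ideal.Quotient.mkₐ ℚ firstIdeal).toLinearMap by
    obtain ⟨x, hx, e⟩ := h
    exact ⟨x, hx, e⟩
  rw [q.as_sum]
  refine Submodule.sum_mem _ fun m hm => ?_
  have hdeg : m.degree = k + 2 + 1 := by
    have := hq (mem_support_iff.1 hm)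
    rw [Finsupp.degree_eq_weight_one]; exact this
  rw [← mul_one (coeff m q), ← smul_eq_mul, ← smul_monomial]
  refine Submodule.smul_mem _ _ ?_
  obtain ⟨a, m₁, h₁, rfl⟩ := exists_single_add hdeg
  obtain ⟨b, m₂, h₂, rfl⟩ := exists_single_add h₁
  obtain ⟨c, m₃, h₃, rfl⟩ := exists_single_add h₂
  obtain ⟨p, hp, hI⟩ := cubic_mem a b c
  refine ⟨Ideal.Quotient.mk _ (monomial m₃ 1 * p),
    ⟨monomial m₃ 1 * p, (isHomogeneous_monomial 1 h₃).mul hp, rfl⟩, ?_⟩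
  change Ideal.Quotient.mk _ (X 0) * Ideal.Quotient.mk _ (monomial m₃ 1 * p)
    = Ideal.Quotient.mk _ _
  rw [← map_mul, eq_comm, Ideal.Quotient.eq]
  have e : monomial (Finsupp.single a 1 + (Finsupp.single b 1 + (Finsupp.single c 1 + m₃))) (1 : ℚ)
      = X a * X b * X c * monomial m₃ 1 := by
    simp [X, monomial_mul, add_assoc]
  rw [e]
  convert Ideal.mul_mem_left _ (monomial m₃ 1) hI using 1
  ring

/-- The exponents of monomials dividing no `x₁x_j`. -/
def avoided : Set (Fin 4 →₀ ℕ) :=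
  {m | ∀ j, ¬ m ≤ Finsupp.single 0 1 + Finsupp.single j 1}

lemma isUpperSet_avoided : IsUpperSet avoided :=
  fun _ _ hab ha j hb => ha j (hab.trans hb)

/-- Each generator of `I` has only terms dividing no `x₁x_j`. -/
lemma ideal_le_noTerms : firstIdeal ≤ restrictSupportIdeal ℚ avoided isUpperSet_avoided := by
  set J := restrictSupportIdeal ℚ avoided isUpperSet_avoided
  have mon : ∀ m ∈ avoided, (monomial m 1 : MvPolynomial (Fin 4) ℚ) ∈ J := by
    intro m hm
    change (monomial m 1 : MvPolynomial (Fin 4) ℚ) ∈ restrictSupport ℚ avoided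
    rw [mem_restrictSupport_iff]
    intro n hn
    have := support_monomial_subset hn
    rw [Finset.mem_singleton] at this
    exact this ▸ hm
  have h33 : (X 3 ^ 2 : MvPolynomial (Fin 4) ℚ) ∈ J := by
    rw [X_pow_eq_monomial]
    refine mon _ fun j hj => ?_
    have := hj 3
    fin_cases j <;> simp at this
  have h23 : (X 2 * X 3 : MvPolynomial (Fin 4) ℚ) ∈ J := by
    rw [X, X, monomial_mul, one_mul]
    refine mon _ fun j hj => ?_
    have h2 := hj 2
    have h3 := hj 3
    fin_cases j <;> simp at h2 h3
  have h3 : ∀ a b c : Fin 4, (X a * X b * X c : MvPolynomial (Fin 4) ℚ) ∈ J := by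
    intro a b c
    rw [X, X, X, monomial_mul, monomial_mul, one_mul, one_mul]
    refine mon _ fun j hj => ?_
    have := Finsupp.degree_mono hj
    simp at this
  have cub : ∀ (q : MvPolynomial (Fin 4) ℚ) (a b c : Fin 4), q * (X a * X b * X c) ∈ J :=
    fun q a b c => J.mul_mem_left q (h3 a b c)
  rw [firstIdeal, Ideal.span_le]
  intro g hg
  simp only [Set.mem_insert_iff, Set.mem_singleton_iff] at hg
  rw [SetLike.mem_coe]
  rcases hg with rfl | rfl | rfl | rfl | rfl | rfl | rfl | rfl | rfl | rfl | rfl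
  · exact h33
  · exact h23
  · convert h3 2 2 2 using 1; ring
  · convert J.sub_mem (h3 1 2 2) (h3 1 1 3) using 1; ring
  · convert J.add_mem (J.sub_mem (h3 0 2 2) (h3 0 1 3)) (h3 1 1 3) using 1; ring
  · convert h3 1 1 2 using 1; ring
  · convert h3 1 1 1 using 1; ring
  · convert J.add_mem (J.sub_mem (cub (X 0) 0 0 3) (cub (X 0) 0 1 3)) (cub (X 0) 1 1 3) using 1
    ring
  · convert cub (X 0) 0 0 2 using 1; ring
  · convert J.sub_mem (cub (X 0) 0 0 1) (cub (X 0) 0 1 1) using 1; ring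
  · convert cub (X 0) 0 0 0 using 1; ring

/-- Multiplication by `x₁` is injective on `A_0` and `A_1`. -/
lemma inj_low {i : ℕ} (hi : i < 2) (x : MvPolynomial (Fin 4) ℚ ⧸ firstIdeal)
    (hx : x ∈ quotPiece firstIdeal i) (h : Ideal.Quotient.mk firstIdeal (X 0) * x = 0) :
    x = 0 := by
  obtain ⟨p, hp, rfl⟩ := hx
  change Ideal.Quotient.mk _ (X 0) * Ideal.Quotient.mk _ p = 0 at h
  rw [← map_mul, Ideal.Quotient.eq_zero_iff_mem] at h
  have hJ : X 0 * p ∈ restrictSupport ℚ avoided := ideal_le_noTerms h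
  rw [mem_restrictSupport_iff] at hJ
  suffices p = 0 by rw [this, map_zero]
  by_contra hne
  obtain ⟨m, hm⟩ := ne_zero_iff.1 hne
  have hdeg : m.degree = i := by
    have := hp hm
    rw [Finsupp.degree_eq_weight_one]; exact this
  have hmem : Finsupp.single 0 1 + m ∈ avoided := by
    apply hJ
    rw [Finset.mem_coe, mem_support_iff, coeff_X_mul]
    exact hm
  obtain ⟨j, hj⟩ : ∃ j, m ≤ Finsupp.single j 1 := by
    rcases i with _ | i
    · rw [Finsupp.degree_eq_zero_iff] at hdeg
      exact ⟨0, by simp [hdeg]⟩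
    · obtain ⟨j, m', h', rfl⟩ := exists_single_add hdeg
      obtain rfl : i = 0 := by omega
      rw [Finsupp.degree_eq_zero_iff] at h'
      exact ⟨j, by simp [h']⟩
  exact hmem j (by gcongr)

/-- `A_i = 0` for `i ≥ 6`, as `A_i = x₁⁴A_{i-4}` and `x₁⁴ ∈ I`. -/
lemma piece_eq_bot (i : ℕ) (hi : 6 ≤ i) : quotPiece firstIdeal i = ⊥ := by
  obtain ⟨k, rfl⟩ := Nat.exists_eq_add_of_le' hi
  rw [eq_bot_iff]
  intro y hy
  obtain ⟨y₁, h₁, rfl⟩ := piece_le_mul (k + 3) y hy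
  obtain ⟨y₂, h₂, rfl⟩ := piece_le_mul (k + 2) y₁ h₁
  obtain ⟨y₃, h₃, rfl⟩ := piece_le_mul (k + 1) y₂ h₂
  obtain ⟨y₄, h₄, rfl⟩ := piece_le_mul k y₃ h₃
  have h0 : Ideal.Quotient.mk firstIdeal (X 0) ^ 4 = 0 := by
    rw [← map_pow, Ideal.Quotient.eq_zero_iff_mem]
    exact Ideal.subset_span (by simp)
  rw [Submodule.mem_bot]
  linear_combination y₄ * h0

/-- the first ideal of Abdallah et al. is Artinian and has WLP.
Here `X 0, X 1, X 2, X 3` stand for `x_1, x_2, x_3, x_4`. -/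
theorem abdallah_first_ideal_has_WLP :
    (∃ N : ℕ, ∀ i ≥ N, quotPiece (Ideal.span
      ({X 3 ^ 2, X 2 * X 3, X 2 ^ 3,
        X 1 * X 2 ^ 2 - X 1 ^ 2 * X 3,
        X 0 * X 2 ^ 2 - X 0 * X 1 * X 3 + X 1 ^ 2 * X 3,
        X 1 ^ 2 * X 2, X 1 ^ 3,
        X 0 ^ 3 * X 3 - X 0 ^ 2 * X 1 * X 3 + X 0 * X 1 ^ 2 * X 3,
        X 0 ^ 3 * X 2, X 0 ^ 3 * X 1 - X 0 ^ 2 * X 1 ^ 2, X 0 ^ 4} :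
        Set (MvPolynomial (Fin 4) ℚ))) i = ⊥) ∧
    HasWLP (Ideal.span
      ({X 3 ^ 2, X 2 * X 3, X 2 ^ 3,
        X 1 * X 2 ^ 2 - X 1 ^ 2 * X 3,
        X 0 * X 2 ^ 2 - X 0 * X 1 * X 3 + X 1 ^ 2 * X 3,
        X 1 ^ 2 * X 2, X 1 ^ 3,
        X 0 ^ 3 * X 3 - X 0 ^ 2 * X 1 * X 3 + X 0 * X 1 ^ 2 * X 3,
        X 0 ^ 3 * X 2, X 0 ^ 3 * X 1 - X 0 ^ 2 * X 1 ^ 2, X 0 ^ 4} :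
        Set (MvPolynomial (Fin 4) ℚ))) := by
  refine ⟨⟨6, piece_eq_bot⟩, X 0, isHomogeneous_X ℚ 0, fun i => ?_⟩
  rcases lt_or_ge i 2 with hi | hi
  · exact Or.inl (inj_low hi)
  · obtain ⟨k, rfl⟩ := Nat.exists_eq_add_of_le' hi
    exact Or.inr (piece_le_mul k)
end
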